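/- Let $f_{rel} > 0$, $S > 0$, $D > 0$ with $D f_{rel} > S$, and define $E_2(X) = (S - X) f_{rel}^2 + \frac{2X^3}{(D f_{rel} - S + X)^2} f_{rel}^2$ for $X \geq 0$. Let $\varepsilon' > 0$ and let $X_a, X_o$ satisfy $0 \leq X_a \leq X_o \leq S$ and $X_o \leq (1 + \varepsilon') X_a$. Then $E_2(X_a) \leq (1 + \varepsilon')^2 E_2(X_o) + \varepsilon' S f_{rel}^2$. -/

import Mathlib

/-!
The replicated tasks run at speed `v(X) = X f / (D f - S + X)`, which is nondecreasing in the
replicated weight `X`, so the replication energy `2 X v(X) ^ 2` is nondecreasing too. Lowering the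
replicated weight from `Xo` to `Xa` can therefore only raise the other term `(S - X) f ^ 2`, by
`(Xo - Xa) f ^ 2 ≤ ε' Xa f ^ 2`. The error is thus purely additive; the factor `(1 + ε') ^ 2` is
slack, absorbed by `0 ≤ E₂(Xo)`.
-/

open Set

section

variable {K : Type*} [Field K]

/-- The common speed of the replicated tasks, of total weight `X`, when a chain of total weight `S`
just meets the deadline `D` and its other tasks run at speed `f`: the solution `v` of
`(S - X) / f + X / v = D` for `X > 0`, the two copies of a replicated task running in parallel. -/
def replicaSpeed (f S D X : K) : K := X / (D * f - S + X) * f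

/-- The energy `E₂(X)` of a chain of total weight `S` with deadline `D` and reliability speed `f`,
when tasks of total weight `X` are replicated. A task of weight `w` run at speed `v` consumes
`w * v ^ 2`, and the replicated tasks are counted twice. -/
def chainEnergy (f S D X : K) : K := (S - X) * f ^ 2 + 2 * (X * replicaSpeed f S D X ^ 2)

lemma chainEnergy_eq (f S D X : K) :
    chainEnergy f S D X = (S - X) * f ^ 2 + 2 * X ^ 3 / (D * f - S + X) ^ 2 * f ^ 2 := by
  rw [chainEnergy, replicaSpeed, mul_pow, div_pow]
  ring

variable [LinearOrder K] [IsStrictOrderedRing K] {f S D X Y ε : K}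

lemma monotoneOn_div_const_add {c : K} (hc : 0 < c) : MonotoneOn (fun x ↦ x / (c + x)) (Ici 0) := by
  intro x (hx : 0 ≤ x) y (hy : 0 ≤ y) hxy
  have cross_mul : x * (c + y) ≤ y * (c + x) := by
    linarith [mul_le_mul_of_nonneg_right hxy hc.le]
  exact (div_le_div_iff₀ (by positivity) (by positivity)).2 cross_mul

lemma replicaSpeed_nonneg (hf : 0 ≤ f) (hD : S ≤ D * f) (hX : 0 ≤ X) :
    0 ≤ replicaSpeed f S D X :=
  mul_nonneg (div_nonneg hX (add_nonneg (sub_nonneg.2 hD) hX)) hf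

lemma monotoneOn_replicaSpeed (hf : 0 ≤ f) (hD : S < D * f) :
    MonotoneOn (replicaSpeed f S D) (Ici 0) := fun _ hX _ hY hXY ↦
  mul_le_mul_of_nonneg_right (monotoneOn_div_const_add (sub_pos.2 hD) hX hY hXY) hf

lemma monotoneOn_mul_replicaSpeed_sq (hf : 0 ≤ f) (hD : S < D * f) :
    MonotoneOn (fun X ↦ X * replicaSpeed f S D X ^ 2) (Ici 0) :=
  monotoneOn_id.mul
    (fun _ hX _ hY hXY ↦ pow_le_pow_left₀ (replicaSpeed_nonneg hf hD.le hX)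
      (monotoneOn_replicaSpeed hf hD hX hY hXY) 2)
    (fun _ hX ↦ hX) (fun _ _ ↦ sq_nonneg _)

lemma chainEnergy_nonneg (hX : 0 ≤ X) (hXS : X ≤ S) : 0 ≤ chainEnergy f S D X :=
  add_nonneg (mul_nonneg (sub_nonneg.2 hXS) (sq_nonneg f)) (by positivity)

lemma chainEnergy_le_add_sub_mul_sq (hf : 0 ≤ f) (hD : S < D * f) (hX : 0 ≤ X) (hXY : X ≤ Y) :
    chainEnergy f S D X ≤ chainEnergy f S D Y + (Y - X) * f ^ 2 := by
  have replication_energy_le : X * replicaSpeed f S D X ^ 2 ≤ Y * replicaSpeed f S D Y ^ 2 :=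
    monotoneOn_mul_replicaSpeed_sq hf hD hX (hX.trans hXY) hXY
  unfold chainEnergy
  linarith

theorem fptas_energy_bound_general (hf : 0 ≤ f) (hD : S < D * f) (hX : 0 ≤ X) (hXY : X ≤ Y)
    (hYX : Y ≤ (1 + ε) * X) :
    chainEnergy f S D X ≤ chainEnergy f S D Y + ε * X * f ^ 2 := by
  have weight_loss_le : Y - X ≤ ε * X := by linarith
  calc chainEnergy f S D X ≤ chainEnergy f S D Y + (Y - X) * f ^ 2 :=
        chainEnergy_le_add_sub_mul_sq hf hD hX hXY
    _ ≤ chainEnergy f S D Y + ε * X * f ^ 2 := by gcongr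

end

/-- Key approximation step in the FPTAS analysis:
if `Xa ≤ Xo ≤ (1+ε')Xa` then `E2(Xa) ≤ (1+ε')² E2(Xo) + ε' S f_rel²`. -/
theorem fptas_energy_bound
    (frel S D : ℝ) (hfrel : 0 < frel) (hS : 0 < S) (hD : 0 < D)
    (hDS : S < D * frel)
    (E2 : ℝ → ℝ)
    (hE2 : ∀ X, E2 X =
      (S - X) * frel ^ 2 + 2 * X ^ 3 / (D * frel - S + X) ^ 2 * frel ^ 2)
    (ε' Xa Xo : ℝ) (hε : 0 < ε')
    (h0 : 0 ≤ Xa) (h1 : Xa ≤ Xo) (h2 : Xo ≤ S) (h3 : Xo ≤ (1 + ε') * Xa) :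
    E2 Xa ≤ (1 + ε') ^ 2 * E2 Xo + ε' * S * frel ^ 2 := by
  obtain rfl : E2 = chainEnergy frel S D := funext fun X ↦ by rw [hE2, chainEnergy_eq]
  have energy_nonneg : 0 ≤ chainEnergy frel S D Xo := chainEnergy_nonneg (h0.trans h1) h2
  have one_le_factor : 1 ≤ (1 + ε') ^ 2 := one_le_pow₀ (by linarith)
  have hXaS : Xa ≤ S := h1.trans h2
  calc chainEnergy frel S D Xa ≤ chainEnergy frel S D Xo + ε' * Xa * frel ^ 2 :=
        fptas_energy_bound_general hfrel.le hDS h0 h1 h3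
    _ ≤ (1 + ε') ^ 2 * chainEnergy frel S D Xo + ε' * S * frel ^ 2 :=
        add_le_add (le_mul_of_one_le_left energy_nonneg one_le_factor) (by gcongr)
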